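/- For all f, g in the algebra 𝒜, the weight ω(f) = ∫_{ℝ²} f(x) d²x satisfies the twisted trace property ω(f ⋆ g) = ω((ℰ▷g) ⋆ f), where (ℰ▷g)(x) = g(x₀ + iλ, x₁). -/

import Mathlib

open MeasureTheory Complex

/-- Fourier transform in the first variable:
(𝓕₀f)(p₀, x₁) = ∫ e^{-ip₀y₀} f(y₀, x₁) dy₀. -/
noncomputable def F0 (f : ℝ × ℝ → ℂ) : ℝ × ℝ → ℂ :=
  fun p => ∫ y0 : ℝ, Complex.exp (-Complex.I * (p.1 : ℂ) * (y0 : ℂ)) * f (y0, p.2)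

/-- The deformed (star) product of κ-Minkowski:
(f ⋆ g)(x) = (2π)⁻¹ ∫ e^{ip₀x₀} (𝓕₀f)(p₀,x₁) g(x₀, e^{-λp₀}x₁) dp₀. -/
noncomputable def sprod (lam : ℝ) (f g : ℝ × ℝ → ℂ) : ℝ × ℝ → ℂ :=
  fun x => (2 * Real.pi)⁻¹ • ∫ p0 : ℝ,
    Complex.exp (Complex.I * (p0 : ℂ) * (x.1 : ℂ)) * F0 f (p0, x.2)
      * g (x.1, Real.exp (-lam * p0) * x.2)

/-- The deformed involution:
f*(x) = (2π)⁻¹ ∫ e^{ip₀x₀} (𝓕₀ conj f)(p₀, e^{-λp₀}x₁) dp₀. -/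
noncomputable def sinv (lam : ℝ) (f : ℝ × ℝ → ℂ) : ℝ × ℝ → ℂ :=
  fun x => (2 * Real.pi)⁻¹ • ∫ p0 : ℝ,
    Complex.exp (Complex.I * (p0 : ℂ) * (x.1 : ℂ))
      * F0 (fun y => (starRingEnd ℂ) (f y)) (p0, Real.exp (-lam * p0) * x.2)

/-- Membership in the algebra 𝒜 = 𝓕(𝒮_c): f is the Fourier transform of a
Schwartz function with compact support in the first variable. -/
def InA (f : ℝ × ℝ → ℂ) : Prop :=
  ∃ h : SchwartzMap (ℝ × ℝ) ℂ,
    (∃ R : ℝ, ∀ p : ℝ × ℝ, R < |p.1| → h p = 0) ∧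
    ∀ x : ℝ × ℝ, f x = (2 * Real.pi)⁻¹ • ∫ p : ℝ × ℝ,
      Complex.exp (Complex.I * ((p.1 : ℂ) * (x.1 : ℂ) + (p.2 : ℂ) * (x.2 : ℂ))) * h p

/-- The invariant weight ω(f) = ∫ f(x) d²x. -/
noncomputable def omegaW (f : ℝ × ℝ → ℂ) : ℂ := ∫ x : ℝ × ℝ, f x

/-!
The momentum-space form of the weight of a product is
`ω(f ⋆ g) = (2π)⁻¹ ∫∫ (𝓕₀f)(p, x₁) (𝓕₀g)(-p, e^{-λp}x₁) dx₁ dp`,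
by Fubini's theorem, because `𝓕₀f` has compact support in `p`. Exchanging the two factors by
`p ↦ -p` and `x₁ ↦ e^{-λp}x₁` produces the Jacobian `e^{-λp}`, which is exactly the factor by which
the imaginary translation `x₀ ↦ x₀ + iλ` multiplies `𝓕₀g`. Since `g` is a superposition of plane
waves of bounded frequency in `x₀`, that superposition is its entire extension.
-/

/-! ### Entire functions and Fourier inversion -/

theorem differentiable_integral_cexp_mul_smul {α E : Type*} [MeasurableSpace α] {μ : Measure α}
    [NormedAddCommGroup E] [NormedSpace ℂ E] {a : α → ℂ} {φ : α → E} {R : ℝ}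
    (ha : AEStronglyMeasurable a μ) (hφ : Integrable φ μ) (hR : ∀ x, R < ‖a x‖ → φ x = 0) :
    Differentiable ℂ fun z : ℂ => ∫ x, exp (a x * z) • φ x ∂μ := by
  intro z₀
  have hmeas (z : ℂ) : AEStronglyMeasurable (fun x => exp (a x * z)) μ :=
    continuous_exp.comp_aestronglyMeasurable (ha.mul_const z)
  have hexp (x : α) {z : ℂ} (hx : ‖a x‖ ≤ R) (hz : z ∈ Metric.ball z₀ 1) :
      ‖exp (a x * z)‖ ≤ Real.exp (R * (‖z₀‖ + 1)) := by
    have hz' : ‖z‖ ≤ ‖z₀‖ + 1 := by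
      have := norm_le_norm_add_norm_sub' z z₀
      rw [mem_ball_iff_norm] at hz
      linarith
    refine (norm_exp_le_exp_norm _).trans (Real.exp_le_exp.2 ?_)
    rw [norm_mul]
    exact mul_le_mul hx hz' (norm_nonneg z) ((norm_nonneg _).trans hx)
  refine (hasDerivAt_integral_of_dominated_loc_of_deriv_le
    (F := fun z x => exp (a x * z) • φ x) (F' := fun z x => (exp (a x * z) * a x) • φ x)
    (bound := fun x => Real.exp (R * (‖z₀‖ + 1)) * R * ‖φ x‖)
    (Metric.ball_mem_nhds z₀ one_pos) (.of_forall fun z => (hmeas z).smul hφ.1) ?_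
    (((hmeas z₀).mul ha).smul hφ.1) (.of_forall fun x z hz => ?_) (hφ.norm.const_mul _)
    (.of_forall fun x z _ => ?_)).2.differentiableAt
  · refine (hφ.norm.const_mul (Real.exp (R * (‖z₀‖ + 1)))).mono' ((hmeas z₀).smul hφ.1)
      (.of_forall fun x => ?_)
    rcases lt_or_ge R ‖a x‖ with hx | hx
    · simp [hR x hx]
    · rw [norm_smul]
      gcongr
      exact hexp x hx (Metric.mem_ball_self one_pos)
  · rcases lt_or_ge R ‖a x‖ with hx | hx
    · simp [hR x hx]
    · rw [norm_smul, norm_mul]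
      gcongr
      exact hexp x hx hz
  · have hlin : HasDerivAt (fun w => a x * w) (a x) z := by
      simpa using (hasDerivAt_id z).const_mul (a x)
    exact hlin.cexp.smul_const (φ x)

theorem eq_of_differentiable_of_forall_ofReal_eq {E : Type*} [NormedAddCommGroup E]
    [NormedSpace ℂ E] [CompleteSpace E] {F G : ℂ → E} (hF : Differentiable ℂ F)
    (hG : Differentiable ℂ G) (hFG : ∀ t : ℝ, F t = G t) : F = G := by
  have hreal : Filter.Tendsto ofReal (nhdsWithin 0 {0}ᶜ) (nhdsWithin 0 {0}ᶜ) :=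
    (ofRealCLM.hasDerivAt (x := 0)).tendsto_nhdsNE one_ne_zero
  exact AnalyticOnNhd.eq_of_frequently_eq (z₀ := 0) (fun z _ => hF.analyticAt z)
    (fun z _ => hG.analyticAt z) (hreal.frequently (.of_forall hFG))

theorem integral_cexp_smul_integral_cexp_smul {E : Type*} [NormedAddCommGroup E]
    [NormedSpace ℂ E] [CompleteSpace E] {φ : ℝ → E} {q : ℝ} (hφ : Integrable φ)
    (hφ' : Integrable fun y : ℝ => ∫ p : ℝ, exp (I * p * y) • φ p) (hq : ContinuousAt φ q) :
    ∫ y : ℝ, exp (-I * q * y) • ∫ p : ℝ, exp (I * p * y) • φ p = (2 * Real.pi) • φ q := by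
  set ψ : ℝ → E := fun y => ∫ p : ℝ, exp (I * p * y) • φ p
  have hinv (w : ℝ) : FourierTransformInv.fourierInv φ w = ψ (2 * Real.pi * w) := by
    rw [Real.fourierInv_eq']
    congr! 4
    push_cast [RCLike.inner_apply, conj_trivial]
    ring
  have hint : Integrable (FourierTransform.fourier φ) := by
    refine (hφ'.comp_mul_left' (R := 2 * Real.pi) (by positivity)).comp_neg.congr
      (.of_forall fun w => ?_)
    simp only [← hinv, Real.fourierInv_eq_fourier_neg, neg_neg]
  have hscale := Measure.integral_comp_mul_left (fun y : ℝ => exp (-I * q * y) • ψ y)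
    (2 * Real.pi)
  rw [abs_of_pos (by positivity), eq_inv_smul_iff₀ (by positivity)] at hscale
  rw [← hscale, ← hφ.fourier_fourierInv_eq hint hq, Real.fourier_eq']
  congr! 4 with w
  · congr 1
    push_cast [RCLike.inner_apply, conj_trivial]
    ring
  · exact (hinv w).symm

/-! ### Schwartz functions and decay -/

theorem exists_schwartzMap_eq_smul {D E F : Type*} [NormedAddCommGroup D] [NormedSpace ℝ D]
    [FiniteDimensional ℝ D] [NormedAddCommGroup E] [NormedSpace ℝ E] [NormedAddCommGroup F]
    [NormedSpace ℂ F] {u : D → ℂ} (hu : ContDiff ℝ (⊤ : ℕ∞) u) (h : SchwartzMap (D × E) F) {R : ℝ}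
    (hR : ∀ p : D × E, R < ‖p.1‖ → h p = 0) :
    ∃ k : SchwartzMap (D × E) F, ∀ p, k p = u p.1 • h p := by
  let b : ContDiffBump (0 : D) := ⟨|R| + 1, |R| + 2, by positivity, by linarith⟩
  let v : D → ℂ := fun t => (b t : ℂ) * u t
  have hv : ContDiff ℝ (⊤ : ℕ∞) v := (ofRealCLM.contDiff.comp b.contDiff).mul hu
  have hv_supp : HasCompactSupport v :=
    (b.hasCompactSupport.comp_left (g := ofReal) ofReal_zero).mul_right
  have hv_growth : Function.HasTemperateGrowth fun p : D × E => v p.1 :=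
    (hv_supp.hasTemperateGrowth hv).comp (ContinuousLinearMap.fst ℝ D E).hasTemperateGrowth
  refine ⟨SchwartzMap.smulLeftCLM F (fun p : D × E => v p.1) h, fun p => ?_⟩
  rw [SchwartzMap.smulLeftCLM_apply_apply hv_growth]
  rcases lt_or_ge R ‖p.1‖ with hp | hp
  · simp [hR p hp]
  · have hb : b p.1 = 1 := b.one_of_mem_closedBall <| by
      rw [mem_closedBall_zero_iff]
      exact hp.trans ((le_abs_self R).trans (le_add_of_nonneg_right zero_le_one))
    simp [v, hb]

/-- Quadratic decay in each of the two variables, in the product form that makes `f` integrable on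
the plane and along horizontal lines, with bounds uniform in the other variable. -/
def ProdDecay {E : Type*} [Norm E] (f : ℝ × ℝ → E) : Prop :=
  ∃ C : ℝ, ∀ x, ‖f x‖ ≤ C * ((1 + x.1 ^ 2)⁻¹ * (1 + x.2 ^ 2)⁻¹)

namespace ProdDecay

variable {E : Type*} [NormedAddCommGroup E] {f : ℝ × ℝ → E}

theorem of_schwartzMap [NormedSpace ℝ E] (h : SchwartzMap (ℝ × ℝ) E) : ProdDecay h := by
  refine ⟨2 ^ 4 * (Finset.Iic (4, 0)).sup (fun m => SchwartzMap.seminorm ℝ m.1 m.2) h,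
    fun x => ?_⟩
  have hdecay := SchwartzMap.one_add_le_sup_seminorm_apply (𝕜 := ℝ) (m := (4, 0)) (k := 4) (n := 0)
    le_rfl le_rfl h x
  rw [norm_iteratedFDeriv_zero] at hdecay
  have hsq {t : ℝ} (ht : |t| ≤ ‖x‖) : 1 + t ^ 2 ≤ (1 + ‖x‖) ^ 2 := by
    nlinarith [sq_abs t, abs_nonneg t]
  rw [← mul_inv, ← div_eq_mul_inv, le_div_iff₀ (by positivity), mul_comm]
  refine le_trans ?_ hdecay
  gcongr
  calc (1 + x.1 ^ 2) * (1 + x.2 ^ 2) ≤ (1 + ‖x‖) ^ 2 * (1 + ‖x‖) ^ 2 := by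
        gcongr
        exacts [hsq (norm_fst_le x), hsq (norm_snd_le x)]
    _ = (1 + ‖x‖) ^ 4 := by ring

theorem comp_swap (hf : ProdDecay f) : ProdDecay (f ∘ Prod.swap) := by
  obtain ⟨C, hC⟩ := hf
  exact ⟨C, fun x => (hC x.swap).trans_eq (by simp only [Prod.fst_swap, Prod.snd_swap, mul_comm])⟩

theorem exists_norm_le_fst (hf : ProdDecay f) :
    ∃ C : ℝ, 0 ≤ C ∧ ∀ x, ‖f x‖ ≤ C * (1 + x.1 ^ 2)⁻¹ := by
  obtain ⟨C, hC⟩ := hf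
  have hC₀ : 0 ≤ C := by simpa using (norm_nonneg _).trans (hC 0)
  refine ⟨C, hC₀, fun x => (hC x).trans ?_⟩
  gcongr
  exact mul_le_of_le_one_right (by positivity) (inv_le_one_of_one_le₀ (by nlinarith))

theorem integrable (hf : ProdDecay f) (hc : Continuous f) : Integrable f := by
  obtain ⟨C, hC⟩ := hf
  exact ((integrable_inv_one_add_sq.mul_prod integrable_inv_one_add_sq).const_mul C).mono'
    hc.aestronglyMeasurable (.of_forall hC)

theorem integrable_fst (hf : ProdDecay f) (hc : Continuous f) (x₁ : ℝ) :
    Integrable fun x₀ => f (x₀, x₁) := by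
  obtain ⟨C, -, hC⟩ := hf.exists_norm_le_fst
  exact (integrable_inv_one_add_sq.const_mul C).mono' (by fun_prop) (.of_forall fun x₀ => hC _)

end ProdDecay

/-! ### Partial Fourier transforms and plane waves -/

section PartialFourier

variable {f : ℝ × ℝ → ℂ}

theorem continuous_F0 (hf : ProdDecay f) (hc : Continuous f) : Continuous (F0 f) := by
  obtain ⟨C, -, hC⟩ := hf.exists_norm_le_fst
  refine continuous_of_dominated (bound := fun y => C * (1 + y ^ 2)⁻¹)
    (fun p => Continuous.aestronglyMeasurable (by fun_prop)) (fun p => .of_forall fun y => ?_)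
    (integrable_inv_one_add_sq.const_mul C) (.of_forall fun y => by fun_prop)
  simpa [norm_exp] using hC (y, p.2)

theorem exists_norm_F0_le (hf : ProdDecay f) :
    ∃ C : ℝ, ∀ p, ‖F0 f p‖ ≤ C * (1 + p.2 ^ 2)⁻¹ := by
  obtain ⟨C, hC⟩ := hf
  refine ⟨C * ∫ y : ℝ, (1 + y ^ 2)⁻¹, fun p => ?_⟩
  calc ‖F0 f p‖ ≤ ∫ y : ℝ, C * (1 + p.2 ^ 2)⁻¹ * (1 + y ^ 2)⁻¹ := by
        refine norm_integral_le_of_norm_le (integrable_inv_one_add_sq.const_mul _)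
          (.of_forall fun y => ?_)
        simpa [norm_exp, mul_assoc, mul_comm (1 + p.2 ^ 2)⁻¹] using hC (y, p.2)
    _ = C * (∫ y : ℝ, (1 + y ^ 2)⁻¹) * (1 + p.2 ^ 2)⁻¹ := by rw [integral_const_mul]; ring

/-- The unnormalised inverse Fourier transform in the second variable,
`(p₀, x₁) ↦ ∫ e^{ip₁x₁} f(p₀, p₁) dp₁`, expressed through `F0` so as to inherit its estimates. -/
noncomputable def invF1 (f : ℝ × ℝ → ℂ) : ℝ × ℝ → ℂ :=
  fun p => F0 (f ∘ Prod.swap) (-p.2, p.1)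

theorem invF1_apply (f : ℝ × ℝ → ℂ) (p : ℝ × ℝ) :
    invF1 f p = ∫ p₁ : ℝ, exp (I * p₁ * p.2) * f (p.1, p₁) := by
  simp only [invF1, F0, Function.comp_apply, Prod.swap_prod_mk]
  congr! 4
  push_cast
  ring

theorem continuous_invF1 (hf : ProdDecay f) (hc : Continuous f) : Continuous (invF1 f) :=
  (continuous_F0 hf.comp_swap (hc.comp continuous_swap)).comp (by fun_prop)

theorem integrable_invF1_fst (hf : ProdDecay f) (hc : Continuous f) (x₁ : ℝ) :
    Integrable fun p₀ => invF1 f (p₀, x₁) := by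
  obtain ⟨C, hC⟩ := exists_norm_F0_le hf.comp_swap
  have := continuous_invF1 hf hc
  exact (integrable_inv_one_add_sq.const_mul C).mono'
    (Continuous.aestronglyMeasurable (by fun_prop)) (.of_forall fun p₀ => hC (-x₁, p₀))

end PartialFourier

/-- The superposition of the plane waves `e^{i(p₀z + p₁x₁)}` with amplitude `h`. It is the integral
in `InA`, with the first variable allowed to be complex: for amplitudes of compact support in `p₀`
this is the entire extension of an element of the algebra. -/
noncomputable def planeWaveIntegral (h : ℝ × ℝ → ℂ) (z : ℂ) (x₁ : ℝ) : ℂ :=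
  (2 * Real.pi)⁻¹ • ∫ p : ℝ × ℝ, exp (I * ((p.1 : ℂ) * z + (p.2 : ℂ) * (x₁ : ℂ))) * h p

theorem planeWaveIntegral_add (h : ℝ × ℝ → ℂ) (z w : ℂ) (x₁ : ℝ) :
    planeWaveIntegral h (z + w) x₁ = planeWaveIntegral (fun p => exp (I * w * p.1) * h p) z x₁ := by
  simp only [planeWaveIntegral, ← mul_assoc, ← exp_add]
  congr! 5
  ring

theorem differentiable_planeWaveIntegral {h : ℝ × ℝ → ℂ} (hh : Integrable h) {R : ℝ}
    (hR : ∀ p : ℝ × ℝ, R < |p.1| → h p = 0) (x₁ : ℝ) :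
    Differentiable ℂ fun z => planeWaveIntegral h z x₁ := by
  have hint : Integrable fun p : ℝ × ℝ => exp (I * p.2 * x₁) * h p :=
    hh.bdd_mul (c := 1) (Continuous.aestronglyMeasurable (by fun_prop))
      (.of_forall fun p => by simp [norm_exp])
  have hdiff := differentiable_integral_cexp_mul_smul (a := fun p : ℝ × ℝ => I * p.1) (R := R)
    (Continuous.aestronglyMeasurable (by fun_prop)) hint
    (fun p hp => by simp [hR p (by simpa using hp)])
  have hfactor (z : ℂ) : planeWaveIntegral h z x₁ = (2 * Real.pi)⁻¹ •
      ∫ p : ℝ × ℝ, exp (I * p.1 * z) • (exp (I * p.2 * x₁) * h p) := by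
    simp only [planeWaveIntegral, smul_eq_mul, ← mul_assoc, ← exp_add]
    congr! 5
    ring
  simp only [hfactor]
  exact hdiff.const_smul (2 * Real.pi)⁻¹

theorem planeWaveIntegral_ofReal {h : ℝ × ℝ → ℂ} (hh : Integrable h) (x₀ x₁ : ℝ) :
    planeWaveIntegral h x₀ x₁ =
      (2 * Real.pi)⁻¹ • ∫ p₀ : ℝ, exp (I * p₀ * x₀) * invF1 h (p₀, x₁) := by
  have hint : Integrable fun p : ℝ × ℝ => exp (I * ((p.1 : ℂ) * x₀ + (p.2 : ℂ) * x₁)) * h p :=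
    hh.bdd_mul (c := 1) (Continuous.aestronglyMeasurable (by fun_prop))
      (.of_forall fun p => by simp [norm_exp])
  rw [planeWaveIntegral, Measure.volume_eq_prod, integral_prod _ hint]
  simp only [invF1_apply, ← integral_const_mul, ← mul_assoc, ← exp_add]
  congr! 7
  ring

theorem exists_schwartzMap_eq_planeWaveIntegral (h : SchwartzMap (ℝ × ℝ) ℂ) :
    ∃ G : SchwartzMap (ℝ × ℝ) ℂ, ∀ x : ℝ × ℝ, G x = planeWaveIntegral h x.1 x.2 := by
  let e := WithLp.prodContinuousLinearEquiv 2 ℝ ℝ ℝ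
  let H : SchwartzMap (WithLp 2 (ℝ × ℝ)) ℂ := SchwartzMap.compCLMOfContinuousLinearEquiv ℝ e h
  let s : (ℝ × ℝ) ≃L[ℝ] WithLp 2 (ℝ × ℝ) := e.symm.trans
    (ContinuousLinearEquiv.smulLeft (Units.mk0 (2 * Real.pi)⁻¹ (by positivity)))
  refine ⟨(2 * Real.pi)⁻¹ • SchwartzMap.compCLMOfContinuousLinearEquiv ℝ s
    (FourierTransformInv.fourierInv H), fun x => ?_⟩
  have hs : s x = (2 * Real.pi)⁻¹ • WithLp.toLp 2 x := rfl
  rw [planeWaveIntegral, smul_apply,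
    SchwartzMap.compCLMOfContinuousLinearEquiv_apply, Function.comp_apply,
    SchwartzMap.fourierInv_coe, Real.fourierInv_eq',
    ← (WithLp.volume_preserving_ofLp ℝ ℝ).integral_comp
      (MeasurableEquiv.toLp 2 (ℝ × ℝ)).symm.measurableEmbedding]
  congr! 4
  rw [hs, real_inner_smul_right]
  simp only [mul_inv_rev, WithLp.prod_inner_apply, WithLp.ofLp_fst, WithLp.ofLp_snd,
    RCLike.inner_apply, Real.ringHom_apply, ofReal_mul, ofReal_ofNat, ofReal_inv, ofReal_add]
  field_simp

theorem F0_planeWaveIntegral (h : SchwartzMap (ℝ × ℝ) ℂ) :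
    F0 (fun x => planeWaveIntegral h x.1 x.2) = invF1 h := by
  ext ⟨q, x₁⟩
  have hd := ProdDecay.of_schwartzMap h
  have hslice := planeWaveIntegral_ofReal (hd.integrable h.continuous)
  have hint : Integrable fun y : ℝ => ∫ p : ℝ, exp (I * p * y) • invF1 h (p, x₁) := by
    obtain ⟨G, hG⟩ := exists_schwartzMap_eq_planeWaveIntegral h
    refine (((ProdDecay.of_schwartzMap G).integrable_fst G.continuous x₁).smul
      (2 * Real.pi)).congr (.of_forall fun y => ?_)
    simp only [Pi.smul_apply, hG, hslice, smul_eq_mul]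
    rw [smul_inv_smul₀ (by positivity)]
  have hcont : Continuous fun p => invF1 h (p, x₁) :=
    (continuous_invF1 hd h.continuous).comp (by fun_prop)
  have hinv := integral_cexp_smul_integral_cexp_smul (q := q)
    (integrable_invF1_fst hd h.continuous x₁) hint hcont.continuousAt
  rw [← inv_smul_eq_iff₀ (by positivity), ← integral_smul] at hinv
  rw [← hinv, F0]
  simp only [hslice, smul_eq_mul, mul_smul_comm]

/-! ### The algebra and its weight -/

namespace InA

variable {f g : ℝ × ℝ → ℂ}

theorem exists_schwartzMap_eq (hf : InA f) : ∃ G : SchwartzMap (ℝ × ℝ) ℂ, f = G := by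
  obtain ⟨h, -, hfh⟩ := hf
  obtain ⟨G, hG⟩ := exists_schwartzMap_eq_planeWaveIntegral h
  exact ⟨G, funext fun x => (hfh x).trans (hG x).symm⟩

theorem prodDecay (hf : InA f) : ProdDecay f := by
  obtain ⟨G, rfl⟩ := hf.exists_schwartzMap_eq
  exact .of_schwartzMap G

theorem continuous (hf : InA f) : Continuous f := by
  obtain ⟨G, rfl⟩ := hf.exists_schwartzMap_eq
  exact G.continuous

theorem exists_F0_eq_zero (hf : InA f) : ∃ R : ℝ, ∀ p : ℝ × ℝ, R < |p.1| → F0 f p = 0 := by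
  obtain ⟨h, ⟨R, hR⟩, hfh⟩ := hf
  obtain rfl : f = fun x => planeWaveIntegral h x.1 x.2 := funext hfh
  refine ⟨R, fun p hp => ?_⟩
  rw [F0_planeWaveIntegral, invF1_apply]
  simp [fun p₁ : ℝ => hR (p.1, p₁) hp]

theorem complex_translate {gC : ℂ → ℝ → ℂ} (hg : InA g)
    (hext : ∀ x : ℝ × ℝ, gC (x.1 : ℂ) x.2 = g x)
    (hent : ∀ x₁ : ℝ, Differentiable ℂ fun z => gC z x₁) (w : ℂ) :
    InA (fun x => gC (x.1 + w) x.2) ∧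
      ∀ p, F0 (fun x => gC (x.1 + w) x.2) p = exp (I * w * p.1) * F0 g p := by
  obtain ⟨h, ⟨R, hR⟩, hgh⟩ := hg
  obtain rfl : g = fun x => planeWaveIntegral h x.1 x.2 := funext hgh
  obtain ⟨k, hk⟩ := exists_schwartzMap_eq_smul (u := fun t : ℝ => exp (I * w * t))
    (contDiff_const.mul ofRealCLM.contDiff).cexp h hR
  have hint := (ProdDecay.of_schwartzMap h).integrable h.continuous
  have hgC (z : ℂ) (x₁ : ℝ) : gC z x₁ = planeWaveIntegral h z x₁ :=
    congrFun (eq_of_differentiable_of_forall_ofReal_eq (hent x₁)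
      (differentiable_planeWaveIntegral hint hR x₁) fun t => hext (t, x₁)) z
  have htranslate : (fun x : ℝ × ℝ => gC (x.1 + w) x.2) =
      fun x => planeWaveIntegral k x.1 x.2 := by
    ext x
    rw [hgC, planeWaveIntegral_add]
    simp only [← smul_eq_mul (a := exp _), ← hk]
  rw [htranslate]
  refine ⟨⟨k, ⟨R, fun p hp => by rw [hk, hR p hp, smul_zero]⟩, fun _ => rfl⟩, fun p => ?_⟩
  simp only [F0_planeWaveIntegral, invF1_apply, hk, smul_eq_mul, ← integral_const_mul]
  congr! 2
  ring

end InA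

section Weight

variable {f g : ℝ × ℝ → ℂ} {R : ℝ}

theorem integrable_sprod_integrand (lam : ℝ) (hf : ProdDecay f) (hfc : Continuous f)
    (hg : ProdDecay g) (hgc : Continuous g) (hR : ∀ p : ℝ × ℝ, R < |p.1| → F0 f p = 0) :
    Integrable fun q : (ℝ × ℝ) × ℝ => exp (I * (q.2 : ℂ) * (q.1.1 : ℂ)) * F0 f (q.2, q.1.2)
      * g (q.1.1, Real.exp (-lam * q.2) * q.1.2) := by
  have hFc := continuous_F0 hf hfc
  obtain ⟨A, hA⟩ := exists_norm_F0_le hf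
  obtain ⟨B, hB₀, hB⟩ := hg.exists_norm_le_fst
  have hbound : Integrable fun x : ℝ × ℝ => (B * (1 + x.1 ^ 2)⁻¹) * (A * (1 + x.2 ^ 2)⁻¹) :=
    (integrable_inv_one_add_sq.const_mul B).mul_prod (integrable_inv_one_add_sq.const_mul A)
  have hwindow : Integrable ((Set.Icc (-R) R).indicator fun _ : ℝ => (1 : ℝ)) :=
    (integrable_indicator_iff measurableSet_Icc).2 (by simp)
  refine (hbound.mul_prod hwindow).mono' (Continuous.aestronglyMeasurable (by fun_prop))
    (.of_forall fun ⟨x, p₀⟩ => ?_)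
  by_cases hp : p₀ ∈ Set.Icc (-R) R
  · have hle := mul_le_mul (hB (x.1, Real.exp (-lam * p₀) * x.2)) (hA (p₀, x.2)) (norm_nonneg _)
      (by positivity)
    simpa [hp, norm_exp, mul_comm ‖F0 f _‖] using hle
  · simp [hp, hR (p₀, x.2) (not_le.1 (mt abs_le.1 hp))]

theorem omegaW_sprod (lam : ℝ) (hf : ProdDecay f) (hfc : Continuous f) (hg : ProdDecay g)
    (hgc : Continuous g) (hR : ∀ p : ℝ × ℝ, R < |p.1| → F0 f p = 0) :
    omegaW (sprod lam f g) = (2 * Real.pi)⁻¹ • ∫ p₀ : ℝ, ∫ x₁ : ℝ,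
      F0 f (p₀, x₁) * F0 g (-p₀, Real.exp (-lam * p₀) * x₁) := by
  have hint := integrable_sprod_integrand lam hf hfc hg hgc hR
  simp only [omegaW, sprod]
  rw [integral_smul, integral_integral_swap hint]
  congr 1
  refine integral_congr_ae ?_
  filter_upwards [hint.prod_left_ae] with p₀ hp₀
  rw [Measure.volume_eq_prod, integral_prod_symm _ hp₀]
  congr! 2 with x₁
  rw [F0.eq_def g, ← integral_const_mul]
  congr! 2
  push_cast
  ring_nf

end Weight

theorem integral_mul_comp_mul_left {A : Type*} [NormedRing A] [NormedSpace ℝ A] (u v : ℝ → A)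
    {c : ℝ} (hc : c ≠ 0) : ∫ x, u x * v (c * x) = |c|⁻¹ • ∫ x, u (c⁻¹ * x) * v x := by
  simpa [hc, abs_inv] using Measure.integral_comp_mul_left (fun x => u (c⁻¹ * x) * v x) c

theorem stmt7_general (lam : ℝ) (f g : ℝ × ℝ → ℂ) (hf : InA f) (hg : InA g) (gC : ℂ → ℝ → ℂ)
    (hext : ∀ x : ℝ × ℝ, gC (x.1 : ℂ) x.2 = g x)
    (hent : ∀ x1 : ℝ, Differentiable ℂ fun z => gC z x1) :
    omegaW (sprod lam f g)
      = omegaW (sprod lam (fun x => gC ((x.1 : ℂ) + lam * Complex.I) x.2) f) := by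
  obtain ⟨hg', hF0⟩ := hg.complex_translate hext hent (lam * I)
  obtain ⟨R, hR⟩ := hf.exists_F0_eq_zero
  obtain ⟨S, hS⟩ := hg'.exists_F0_eq_zero
  rw [omegaW_sprod lam hf.prodDecay hf.continuous hg.prodDecay hg.continuous hR,
    omegaW_sprod lam hg'.prodDecay hg'.continuous hf.prodDecay hf.continuous hS,
    ← integral_neg_eq_self]
  congr! 3 with p₀
  have hmod : exp (I * (lam * I) * p₀) = (Real.exp (lam * p₀))⁻¹ := by
    rw [← Real.exp_neg, ofReal_exp]
    push_cast
    congr 1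
    linear_combination (lam * p₀ : ℂ) * I_sq
  rw [neg_neg, neg_mul_neg]
  refine (integral_mul_comp_mul_left (fun x₁ => F0 f (-p₀, x₁)) (fun x₁ => F0 g (p₀, x₁))
    (Real.exp_ne_zero (lam * p₀))).trans ?_
  rw [Real.abs_exp, ← integral_smul]
  simp only [hF0, hmod, neg_mul, Real.exp_neg, real_smul, ofReal_inv]
  congr! 2
  ring

/-- The twisted trace property ω(f ⋆ g) = ω((ℰ▷g) ⋆ f), where
(ℰ▷g)(x) = g(x₀+iλ, x₁) via the entire extension of g in the first variable. -/
theorem stmt7 (lam : ℝ) (hlam : 0 < lam) (f g : ℝ × ℝ → ℂ)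
    (hf : InA f) (hg : InA g)
    (gC : ℂ → ℝ → ℂ)
    (hext : ∀ x : ℝ × ℝ, gC (x.1 : ℂ) x.2 = g x)
    (hent : ∀ x1 : ℝ, Differentiable ℂ fun z => gC z x1) :
    omegaW (sprod lam f g)
      = omegaW (sprod lam (fun x => gC ((x.1 : ℂ) + lam * Complex.I) x.2) f) :=
  stmt7_general lam f g hf hg gC hext hent
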